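/- arXiv:1509.02424 — 2 statements merged into one kernel-verified Lean document; each statement's English description precedes it below -/
import Mathlib

section
/- Let P be a preference profile with linear preference orders over a finite set A of alternatives, let L be an agenda over A, let k ≥ 0 be an integer and p ∈ A. If there exists a list of k linear orders over A whose addition to P makes p the successive winner (respectively, the amendment winner, assuming the total number of voters after addition makes the procedure well defined) under L, then there exists a single linear order ≻* over A such that adding k voters each with preference order ≻* to P makes p the successive winner (respectively, the amendment winner) under L. -/
open scoped Classical

/-- The number of voters in profile `prof` who strictly prefer `b` to `c`. -/
noncomputable def prefCount {α : Type*} {n : ℕ} (prof : Fin n → α → α → Prop) (b c : α) : ℕ :=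
  (Finset.univ.filter fun i => prof i b c).card

/-- Alternative `b` beats alternative `c`: more than `n/2` voters prefer `b` to `c`. -/
def Beats {α : Type*} {n : ℕ} (prof : Fin n → α → α → Prop) (b c : α) : Prop :=
  2 * prefCount prof b c > n

/-- `a` is an `S`-majority winner: more than `n/2` voters prefer `a`
to every alternative of `S \ {a}`. -/
def IsMajWinner {α : Type*} {n : ℕ} (prof : Fin n → α → α → Prop) (S : Finset α) (a : α) :
    Prop :=
  2 * (Finset.univ.filter fun i => ∀ c ∈ S, c ≠ a → prof i a c).card > n

/-- The successive winner for the agenda given as a list: the first alternative of the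
agenda that is a majority winner with respect to itself and all later alternatives. -/
noncomputable def succWinner {α : Type*} [DecidableEq α] {n : ℕ}
    (prof : Fin n → α → α → Prop) : List α → Option α
  | [] => none
  | a :: rest =>
    if IsMajWinner prof ((a :: rest).toFinset) a then some a
    else succWinner prof rest

/-- The amendment winner for the agenda given as a list: the current round winner is
challenged by the next alternative on the agenda, which takes over if it beats it. -/
noncomputable def amendWinner {α : Type*} {n : ℕ}
    (prof : Fin n → α → α → Prop) : List α → Option α
  | [] => none
  | a :: rest => some (rest.foldl (fun win c => if Beats prof c win then c else win) a)

/-!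
Replace the manipulators' ballots by copies of one order `r`. A voter who comes to rank `b` over `c`
can only help `b` in the duel, and likewise for a majority over a set of alternatives; so a decision
of the procedure survives the replacement as soon as `r` agrees with it.

For the successive procedure, let `r` put `p` first: before `p` is reached, a manipulator voting `r`
supports none of the candidates for `S`-majority winner, and once `p` is reached all of them
support it. For the amendment procedure the choice of `r` has to protect every round, since a
change of winner in one round alters all later ones. In each round the loser leaves for good, so
ranking the alternatives by the round in which they lose, latest first, agrees with all the duels.
-/

section ListOrder

variable {α : Type*}

/-- The strict total order that ranks the alternatives by their first occurrence in the list `R`.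
The alternatives missing from `R` come last, in the order of an arbitrary well-order of `α`. -/
noncomputable def listOrder (R : List α) : α → α → Prop :=
  Function.onFun (Prod.Lex (· < ·) WellOrderingRel) fun x => (R.idxOf x, x)

instance listOrder.isStrictTotalOrder (R : List α) : IsStrictTotalOrder α (listOrder R) :=
  have hinj : Function.Injective fun x => (R.idxOf x, x) := fun _ _ h => congrArg Prod.snd h
  have : IsStrictTotalOrder (ℕ × α) (Prod.Lex (· < ·) WellOrderingRel) := {}
  hinj.isStrictTotalOrder_onFun _

theorem listOrder_of_idxOf_lt {R : List α} {x y : α} (h : R.idxOf x < R.idxOf y) :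
    listOrder R x y :=
  Prod.Lex.left _ _ h

theorem listOrder_singleton {p c : α} (h : c ≠ p) : listOrder [p] p c :=
  listOrder_of_idxOf_lt <| by
    rw [List.idxOf_cons_eq _ rfl, List.idxOf_cons_ne _ h.symm]
    exact Nat.succ_pos _

theorem pairwise_listOrder {R : List α} (h : R.Nodup) : R.Pairwise (listOrder R) :=
  List.pairwise_iff_getElem.2 fun i j hi hj hij =>
    listOrder_of_idxOf_lt <| by rwa [h.idxOf_getElem i hi, h.idxOf_getElem j hj]

end ListOrder

section SwitchTo

variable {β : Type*} {n : ℕ} {r : β} {f g : Fin n → β}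

/-- The profile `g` is obtained from `f` by letting some of the voters replace their ballot by `r`.
Comparing two lists of manipulators amounts to comparing two profiles of the same size. -/
def SwitchTo (r : β) (f g : Fin n → β) : Prop :=
  ∀ i, g i = f i ∨ g i = r

theorem switchTo_append_const {k : ℕ} (prof : Fin n → β) (man : Fin k → β) (r : β) :
    SwitchTo r (Fin.append prof man) (Fin.append prof fun _ => r) :=
  Fin.addCases (fun i => .inl <| by simp only [Fin.append_left])
    fun j => .inr <| by simp only [Fin.append_right]

theorem SwitchTo.card_filter_le (h : SwitchTo r f g) {Q : β → Prop} [DecidablePred fun i => Q (f i)]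
    [DecidablePred fun i => Q (g i)] (hr : Q r) :
    (Finset.univ.filter fun i => Q (f i)).card ≤ (Finset.univ.filter fun i => Q (g i)).card :=
  Finset.card_le_card <| Finset.monotone_filter_right _ fun i _ hf =>
    (h i).elim (fun hi => hi ▸ hf) fun hi => hi ▸ hr

theorem SwitchTo.card_filter_ge (h : SwitchTo r f g) {Q : β → Prop} [DecidablePred fun i => Q (f i)]
    [DecidablePred fun i => Q (g i)] (hr : ¬ Q r) :
    (Finset.univ.filter fun i => Q (g i)).card ≤ (Finset.univ.filter fun i => Q (f i)).card :=
  Finset.card_le_card <| Finset.monotone_filter_right _ fun i _ hg =>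
    (h i).elim (fun hi => hi ▸ hg) fun hi => absurd (hi ▸ hg) hr

end SwitchTo

section Successive

variable {α : Type*} {n : ℕ} {r : α → α → Prop} {f g : Fin n → α → α → Prop}

theorem SwitchTo.isMajWinner (h : SwitchTo r f g) {S : Finset α} {a : α}
    (hr : ∀ c ∈ S, c ≠ a → r a c) (ha : IsMajWinner f S a) : IsMajWinner g S a :=
  ha.trans_le <| Nat.mul_le_mul_left 2 <|
    h.card_filter_le (Q := fun q => ∀ c ∈ S, c ≠ a → q a c) hr

theorem SwitchTo.isMajWinner_of (h : SwitchTo r f g) {S : Finset α} {a b : α} (hb : b ∈ S)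
    (hba : b ≠ a) (hr : ¬ r a b) (ha : IsMajWinner g S a) : IsMajWinner f S a :=
  ha.trans_le <| Nat.mul_le_mul_left 2 <|
    h.card_filter_ge (Q := fun q => ∀ c ∈ S, c ≠ a → q a c) fun hq => hr (hq b hb hba)

variable [DecidableEq α]

theorem mem_of_succWinner_eq_some {p : α} {L : List α} (h : succWinner f L = some p) : p ∈ L := by
  induction L with
  | nil => cases h
  | cons a L ih =>
    rw [succWinner] at h
    split_ifs at h
    · exact Option.some_inj.1 h ▸ List.mem_cons_self
    · exact List.mem_cons_of_mem a (ih h)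

theorem SwitchTo.succWinner_eq_some [Std.Asymm r] (h : SwitchTo r f g) {p : α} {L : List α}
    (hr : ∀ c ∈ L, c ≠ p → r p c) (hp : succWinner f L = some p) : succWinner g L = some p := by
  induction L with
  | nil => cases hp
  | cons a L ih =>
    rw [succWinner] at hp ⊢
    split_ifs at hp with ha
    · obtain rfl : a = p := Option.some_inj.1 hp
      have hrL : ∀ c ∈ (a :: L).toFinset, c ≠ a → r a c := fun c hc => hr c (List.mem_toFinset.1 hc)
      exact if_pos (h.isMajWinner hrL ha)
    · have ih := ih (fun c hc => hr c (List.mem_cons_of_mem a hc)) hp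
      rcases eq_or_ne a p with rfl | hap
      · split_ifs
        · rfl
        · exact ih
      · have hpL : p ∈ (a :: L).toFinset :=
          List.mem_toFinset.2 (List.mem_cons_of_mem a (mem_of_succWinner_eq_some hp))
        have hrap : ¬ r a p := asymm_of r (hr a List.mem_cons_self hap)
        exact (if_neg (mt (h.isMajWinner_of hpL hap.symm hrap) ha)).trans ih

end Successive

section Amendment

variable {α : Type*} {n : ℕ} {r : α → α → Prop} {f g : Fin n → α → α → Prop}

/-- The alternatives of a nonempty agenda ranked by the round of the amendment procedure in which
they lose, latest first; in particular the amendment winner is at the head. -/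
noncomputable def amendRanking (f : Fin n → α → α → Prop) : List α → List α
  | [] => []
  | [a] => [a]
  | a :: c :: L =>
    if Beats f c a then amendRanking f (c :: L) ++ [a] else amendRanking f (a :: L) ++ [c]
termination_by L => L.length

theorem amendRanking_perm (f : Fin n → α → α → Prop) (L : List α) :
    (amendRanking f L).Perm L := by
  induction L using amendRanking.induct f with
  | case1 => rw [amendRanking]
  | case2 a => rw [amendRanking]
  | case3 a c L hca ih =>
    rw [amendRanking, if_pos hca]
    exact (List.perm_append_singleton _ _).trans (ih.cons a)
  | case4 a c L hca ih =>
    rw [amendRanking, if_neg hca]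
    exact ((List.perm_append_singleton _ _).trans (ih.cons c)).trans (.swap a c L)

theorem amendWinner_cons_cons (f : Fin n → α → α → Prop) (a c : α) (L : List α) :
    amendWinner f (a :: c :: L) = amendWinner f ((if Beats f c a then c else a) :: L) :=
  rfl

theorem SwitchTo.beats (h : SwitchTo r f g) {b c : α} (hr : r b c) (hbc : Beats f b c) :
    Beats g b c :=
  hbc.trans_le <| Nat.mul_le_mul_left 2 <| h.card_filter_le (Q := fun q => q b c) hr

theorem SwitchTo.beats_of (h : SwitchTo r f g) {b c : α} (hr : ¬ r b c) (hbc : Beats g b c) :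
    Beats f b c :=
  hbc.trans_le <| Nat.mul_le_mul_left 2 <| h.card_filter_ge (Q := fun q => q b c) hr

theorem rel_of_pairwise_amendRanking_append {a b : α} {L : List α}
    (hr : (amendRanking f (a :: L) ++ [b]).Pairwise r) : r a b :=
  (List.pairwise_append.1 hr).2.2 a ((amendRanking_perm f _).mem_iff.2 List.mem_cons_self) b
    (List.mem_singleton_self b)

theorem SwitchTo.amendWinner_eq [Std.Asymm r] (h : SwitchTo r f g) {L : List α}
    (hr : (amendRanking f L).Pairwise r) : amendWinner g L = amendWinner f L := by
  induction L using amendRanking.induct f with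
  | case1 => rfl
  | case2 a => rfl
  | case3 a c L hca ih =>
    rw [amendRanking, if_pos hca] at hr
    have hca' : Beats g c a := h.beats (rel_of_pairwise_amendRanking_append hr) hca
    rw [amendWinner_cons_cons, amendWinner_cons_cons, if_pos hca, if_pos hca']
    exact ih (List.pairwise_append.1 hr).1
  | case4 a c L hca ih =>
    rw [amendRanking, if_neg hca] at hr
    have hrca : ¬ r c a := asymm_of r (rel_of_pairwise_amendRanking_append hr)
    have hca' : ¬ Beats g c a := mt (h.beats_of hrca) hca
    rw [amendWinner_cons_cons, amendWinner_cons_cons, if_neg hca, if_neg hca']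
    exact ih (List.pairwise_append.1 hr).1

end Amendment

theorem stmt6_general {α : Type*} [DecidableEq α] {n k : ℕ} (prof : Fin n → α → α → Prop)
    (man : Fin k → α → α → Prop) (L : List α) (p : α) :
    (succWinner (Fin.append prof man) L = some p →
      ∃ r : α → α → Prop, IsStrictTotalOrder α r ∧
        succWinner (Fin.append prof fun _ : Fin k => r) L = some p) ∧
    (L.Nodup → amendWinner (Fin.append prof man) L = some p →
      ∃ r : α → α → Prop, IsStrictTotalOrder α r ∧
        amendWinner (Fin.append prof fun _ : Fin k => r) L = some p) := by
  constructor
  · intro hp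
    have hr : ∀ c ∈ L, c ≠ p → listOrder [p] p c := fun c _ => listOrder_singleton
    exact ⟨listOrder [p], inferInstance,
      (switchTo_append_const prof man _).succWinner_eq_some hr hp⟩
  · intro hL hp
    have hR : (amendRanking (Fin.append prof man) L).Nodup := (amendRanking_perm _ L).nodup_iff.2 hL
    exact ⟨listOrder _, inferInstance,
      ((switchTo_append_const prof man _).amendWinner_eq (pairwise_listOrder hR)).trans hp⟩

/-- If some list of `k` linear orders added to the profile makes `p` the successive
(resp. amendment, assuming an odd total number of voters) winner under `L`, then the same
can be achieved by `k` manipulators all casting one common linear order. -/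
theorem stmt6 {α : Type*} [Fintype α] [DecidableEq α] {n : ℕ}
    (prof : Fin n → α → α → Prop)
    (hlin : ∀ i, IsStrictTotalOrder α (prof i))
    (L : List α) (hnodup : L.Nodup) (hcomplete : ∀ a : α, a ∈ L)
    (k : ℕ) (p : α) :
    ((∃ man : Fin k → α → α → Prop, (∀ j, IsStrictTotalOrder α (man j)) ∧
        succWinner (Fin.append prof man) L = some p) →
      (∃ r : α → α → Prop, IsStrictTotalOrder α r ∧
        succWinner (Fin.append prof (fun _ : Fin k => r)) L = some p)) ∧
    (Odd (n + k) →
      (∃ man : Fin k → α → α → Prop, (∀ j, IsStrictTotalOrder α (man j)) ∧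
        amendWinner (Fin.append prof man) L = some p) →
      (∃ r : α → α → Prop, IsStrictTotalOrder α r ∧
        amendWinner (Fin.append prof (fun _ : Fin k => r)) L = some p)) := by
  exact ⟨fun ⟨man, _, hp⟩ => (stmt6_general prof man L p).1 hp,
    fun _ ⟨man, _, hp⟩ => (stmt6_general prof man L p).2 hnodup hp⟩
end

section
/- Let G = (U, E) be an undirected graph with U = {u_1, …, u_r}, r ≥ 3, E = {e_1, …, e_s}, and let h be an integer with 2 ≤ h ≤ r−1. Consider the partial profile with 2r−3 voters, alternative set A = {p, d} ∪ {c_j : e_j ∈ E}, and agenda L: c_1 ▷ c_2 ▷ … ▷ c_s ▷ p ▷ d constructed from G and h as described. Then G has an independent set of size at least h if and only if there is a completion of the vertex voters' partial orders to linear orders under which p is the successive winner under L. -/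
open scoped Classical

/-- The alternatives of the reduction: the preferred alternative `P`, the dummy
alternative `D`, and one edge alternative `C j` for each edge `e_j`. -/
inductive Alt (s : ℕ) : Type
  | P : Alt s
  | D : Alt s
  | C : Fin s → Alt s
  deriving DecidableEq

/-- Edge `j` is incident to vertex `i`. -/
def Inc {r s : ℕ} (e : Fin s → Fin r × Fin r) (i : Fin r) (j : Fin s) : Prop :=
  (e j).1 = i ∨ (e j).2 = i

/-- The strict partial order of the vertex voter `v_i`: the transitive closure of
`⟨I(u_i)⟩ ≻ p ≻ ⟨A ∖ ({p,d} ∪ I(u_i))⟩` together with `d ≻ ⟨A ∖ ({p,d} ∪ I(u_i))⟩`,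
where the fixed order on edge alternatives is the index order. -/
def vVoter {r s : ℕ} (e : Fin s → Fin r × Fin r) (i : Fin r) :
    Alt s → Alt s → Prop := fun x y =>
  match x, y with
  | Alt.C j, Alt.C j' =>
      (Inc e i j ∧ ¬ Inc e i j') ∨ (Inc e i j ∧ Inc e i j' ∧ j < j') ∨
        (¬ Inc e i j ∧ ¬ Inc e i j' ∧ j < j')
  | Alt.C j, Alt.P => Inc e i j
  | Alt.P, Alt.C j => ¬ Inc e i j
  | Alt.D, Alt.C j => ¬ Inc e i j
  | _, _ => False

/-- The linear order `⟨A ∖ {p,d}⟩ ≻ d ≻ p` of the first group of auxiliary voters. -/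
def aux1 {s : ℕ} : Alt s → Alt s → Prop := fun x y =>
  match x, y with
  | Alt.C j, Alt.C j' => j < j'
  | Alt.C _, Alt.D => True
  | Alt.C _, Alt.P => True
  | Alt.D, Alt.P => True
  | _, _ => False

/-- The linear order `⟨A ∖ {p,d}⟩ ≻ p ≻ d` of the second group of auxiliary voters. -/
def aux2 {s : ℕ} : Alt s → Alt s → Prop := fun x y =>
  match x, y with
  | Alt.C j, Alt.C j' => j < j'
  | Alt.C _, Alt.P => True
  | Alt.C _, Alt.D => True
  | Alt.P, Alt.D => True
  | _, _ => False

/-- The partial profile of the reduction: `r` vertex voters, `h − 2` auxiliary voters of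
the first kind, and `r − h − 1` auxiliary voters of the second kind (`2r − 3` voters). -/
def profile10 (r s h : ℕ) (e : Fin s → Fin r × Fin r) :
    Fin (2 * r - 3) → Alt s → Alt s → Prop := fun idx =>
  if hi : (idx : ℕ) < r then vVoter e ⟨idx, hi⟩
  else if (idx : ℕ) < r + (h - 2) then aux1
  else aux2

/-- The agenda `c_1 ▷ c_2 ▷ … ▷ c_s ▷ p ▷ d` of the reduction. -/
def agenda10 (s : ℕ) : List (Alt s) :=
  (List.finRange s).map Alt.C ++ [Alt.P, Alt.D]

/-!
Whatever the completion, the voters who can prefer `c_j` to every later alternative are the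
auxiliary voters and the two voters whose vertices lie on `e_j`, and the latter do so exactly when
they put `c_j` above `d`. Since `r - 3` of the `2r - 3` voters are auxiliary, `c_j` loses its round
iff at most one endpoint of `e_j` puts `c_j` above `d`. Likewise `p` wins against `d` iff at least
`h` vertex voters prefer `p` to `d`. A vertex voter ranking `p` above `d` also ranks every incident
`c_j` above `d`, so if `p` wins, the vertices of those voters form an independent set. Conversely,
given an independent set, let its vertex voters insert `d` directly below `p` and let all other
vertex voters put `d` first.
-/

section SuccessiveProcedure

variable {α : Type*} [DecidableEq α] {n : ℕ} {prof : Fin n → α → α → Prop} {l l' : List α} {a : α}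

theorem mem_of_succWinner_eq_some_s10 (h : succWinner prof l = some a) : a ∈ l := by
  induction l with
  | nil => simp [succWinner] at h
  | cons b l ih =>
    rw [succWinner] at h
    split_ifs at h
    · exact Option.some.inj h ▸ List.mem_cons_self
    · exact List.mem_cons_of_mem b (ih h)

theorem succWinner_append_cons_eq_some_iff (ha : a ∉ l) (ha' : a ∉ l') :
    succWinner prof (l ++ a :: l') = some a ↔
      IsMajWinner prof (a :: l').toFinset a ∧
        ∀ c t, c :: t <:+ l → ¬ IsMajWinner prof (c :: t ++ a :: l').toFinset c := by
  induction l with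
  | nil =>
    have not_later : succWinner prof l' ≠ some a := fun h => ha' (mem_of_succWinner_eq_some_s10 h)
    simp [succWinner, not_later]
  | cons b l ih =>
    obtain ⟨hab, hal⟩ := not_or.1 (List.mem_cons.not.1 ha)
    have forall_suffix_iff (M : α → List α → Prop) :
        (∀ c t, c :: t <:+ b :: l → ¬ M c t) ↔ ¬ M b l ∧ ∀ c t, c :: t <:+ l → ¬ M c t := by
      simp only [List.suffix_cons_iff, List.cons.injEq]
      grind
    rw [forall_suffix_iff, and_left_comm, ← ih hal, List.cons_append, succWinner]
    split_ifs with hb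
    · exact iff_of_false (fun h => hab (Option.some.inj h).symm) (fun h => h.1 hb)
    · exact (and_iff_right hb).symm

end SuccessiveProcedure

section Lists

variable {α : Type*} [Preorder α] {l t : List α} {a b : α}

theorem mem_iff_of_cons_suffix_of_pairwise_lt (hl : l.Pairwise (· < ·)) (ht : a :: t <:+ l) :
    b ∈ a :: t ↔ b ∈ l ∧ a ≤ b := by
  obtain ⟨l₀, rfl⟩ := ht
  obtain ⟨-, hat, hlt⟩ := List.pairwise_append.1 hl
  have le_of_mem : b ∈ a :: t → a ≤ b := by
    rintro (_ | ⟨_, hb⟩)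
    exacts [le_rfl, (List.rel_of_pairwise_cons hat hb).le]
  have lt_of_mem (hb : b ∈ l₀) : b < a := hlt b hb a List.mem_cons_self
  grind

end Lists

section Agenda

variable {s n : ℕ} {prof : Fin n → Alt s → Alt s → Prop}

/-- The edge alternative `c_j` together with all alternatives after it in the agenda: the
alternatives that compete when `c_j` is considered. -/
def altsFrom (j : Fin s) : Finset (Alt s) :=
  {Alt.P, Alt.D} ∪ (Finset.Ici j).image Alt.C

theorem lt_of_C_mem_altsFrom {j k : Fin s} (hk : Alt.C k ∈ altsFrom j) (hkj : Alt.C k ≠ Alt.C j) :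
    j < k :=
  lt_of_le_of_ne (by simpa [altsFrom] using hk) fun hjk => hkj (congrArg Alt.C hjk.symm)

theorem toFinset_map_C_append_of_cons_suffix {j : Fin s} {t : List (Fin s)}
    (ht : j :: t <:+ List.finRange s) :
    ((j :: t).map Alt.C ++ [Alt.P, Alt.D]).toFinset = altsFrom j := by
  have mem_iff (k : Fin s) : k ∈ j :: t ↔ j ≤ k := by
    simp [mem_iff_of_cons_suffix_of_pairwise_lt (List.pairwise_lt_finRange s) ht]
  ext x
  simp only [List.mem_toFinset, List.mem_append, List.mem_map, mem_iff, altsFrom,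
    Finset.mem_union, Finset.mem_image, Finset.mem_Ici, List.mem_cons, List.not_mem_nil, or_false,
    Finset.mem_insert, Finset.mem_singleton]
  exact or_comm

theorem succWinner_agenda10_eq_P_iff_isMajWinner :
    succWinner prof (agenda10 s) = some Alt.P ↔
      IsMajWinner prof {Alt.P, Alt.D} Alt.P ∧ ∀ j, ¬ IsMajWinner prof (altsFrom j) (Alt.C j) := by
  rw [agenda10, succWinner_append_cons_eq_some_iff (by simp) (by simp)]
  refine and_congr (by simp) ⟨fun h j => ?_, fun h c t hct => ?_⟩
  · obtain ⟨l₀, t, hl⟩ := List.append_of_mem (List.mem_finRange j)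
    have ht : j :: t <:+ List.finRange s := ⟨l₀, hl.symm⟩
    rw [← toFinset_map_C_append_of_cons_suffix ht]
    exact h (Alt.C j) (t.map Alt.C) (ht.map Alt.C)
  · obtain ⟨_ | ⟨j, t⟩, ht, heq⟩ := List.suffix_map_iff.1 hct
    · simp at heq
    · obtain ⟨rfl, rfl⟩ := List.cons.inj heq
      exact toFinset_map_C_append_of_cons_suffix ht ▸ h j

end Agenda

section Counting

open Finset

theorem card_filter_fin_of_iff_le {m n k : ℕ} (hmn : m ≤ n) (hmk : m ≤ k) {p : Fin n → Prop}
    [DecidablePred p] (hp : ∀ i : Fin n, m ≤ i → (p i ↔ k ≤ i)) :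
    #{i | p i} = #{a : Fin m | p (Fin.castLE hmn a)} + (n - k) := by
  have upper : #{i : Fin n | p i ∧ ¬ (i : ℕ) < m} = n - k := by
    have filter_eq : univ.filter (fun i : Fin n => p i ∧ ¬ (i : ℕ) < m) =
        (univ.filter fun i : Fin n => (i : ℕ) < k)ᶜ := by
      ext i
      simp only [mem_filter_univ, mem_compl, not_lt]
      grind
    rw [filter_eq, card_compl, Fin.card_filter_val_lt, Fintype.card_fin]
    omega
  have lower : #{i : Fin n | p i ∧ (i : ℕ) < m} = #{a : Fin m | p (Fin.castLE hmn a)} := by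
    rw [← card_map (Fin.castLEEmb hmn)]
    congr 1
    ext i
    simp only [mem_filter, mem_univ, true_and, mem_map, Fin.castLEEmb_apply]
    exact ⟨fun ⟨hi, him⟩ => ⟨⟨i, him⟩, hi, rfl⟩, by rintro ⟨a, ha, rfl⟩; exact ⟨ha, a.isLt⟩⟩
  rw [← card_filter_add_card_filter_not (fun i : Fin n => (i : ℕ) < m), filter_filter,
    filter_filter, lower, upper]

theorem isMajWinner_iff_of_forall_iff {α : Type*} {m n k : ℕ} {prof : Fin n → α → α → Prop}
    {S : Finset α} {a : α} {q : Fin m → Prop} [DecidablePred q] (hmn : m ≤ n) (hmk : m ≤ k)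
    (hq : ∀ i, (∀ c ∈ S, c ≠ a → prof (Fin.castLE hmn i) a c) ↔ q i)
    (hk : ∀ i : Fin n, m ≤ i → ((∀ c ∈ S, c ≠ a → prof i a c) ↔ k ≤ i)) :
    IsMajWinner prof S a ↔ n < 2 * (#{i | q i} + (n - k)) := by
  rw [IsMajWinner, gt_iff_lt, card_filter_fin_of_iff_le hmn hmk hk, filter_congr fun i _ => hq i]

theorem two_le_card_filter_inc_and_iff {r s : ℕ} {e : Fin s → Fin r × Fin r} {j : Fin s}
    (hj : (e j).1 ≠ (e j).2) (p : Fin r → Prop) [DecidablePred p] :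
    2 ≤ #{a | Inc e a j ∧ p a} ↔ p (e j).1 ∧ p (e j).2 := by
  have filter_eq : univ.filter (fun a => Inc e a j ∧ p a) =
      ({(e j).1, (e j).2} : Finset (Fin r)).filter p := by
    grind [Inc]
  rw [filter_eq, ← card_pair hj, (card_filter_le _ p).ge_iff_eq, card_filter_eq_iff]
  simp

end Counting

/-- `comp` is a completion of the partial profile `prof`: every voter's preference is replaced by a
linear order extending it. -/
def IsCompletion {ι α : Type*} (prof comp : ι → α → α → Prop) : Prop :=
  ∀ i, IsStrictTotalOrder α (comp i) ∧ ∀ x y, prof i x y → comp i x y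

namespace IsCompletion

variable {ι α : Type*} {prof comp : ι → α → α → Prop} {i : ι} {x y z : α}

theorem of_rel (hc : IsCompletion prof comp) (h : prof i x y) : comp i x y :=
  (hc i).2 x y h

theorem trans (hc : IsCompletion prof comp) (hxy : comp i x y) (hyz : comp i y z) : comp i x z :=
  have := (hc i).1
  trans_of (comp i) hxy hyz

theorem not_of_rel (hc : IsCompletion prof comp) (h : prof i x y) : ¬ comp i y x :=
  have := (hc i).1
  asymm_of (comp i) (hc.of_rel h)

end IsCompletion

section VertexVoters

variable {r s : ℕ} {e : Fin s → Fin r × Fin r} {o : Fin r → Alt s → Alt s → Prop} {a : Fin r}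
  {j : Fin s}

namespace IsCompletion

theorem rel_C_D_of_rel_P_D (ho : IsCompletion (vVoter e) o) (hinc : Inc e a j)
    (hPD : o a Alt.P Alt.D) : o a (Alt.C j) Alt.D :=
  ho.trans (ho.of_rel (show vVoter e a (Alt.C j) Alt.P from hinc)) hPD

theorem forall_altsFrom_rel_C_iff (ho : IsCompletion (vVoter e) o) :
    (∀ x ∈ altsFrom j, x ≠ Alt.C j → o a (Alt.C j) x) ↔ Inc e a j ∧ o a (Alt.C j) Alt.D := by
  constructor
  · intro hj
    refine ⟨?_, hj Alt.D (by simp [altsFrom]) (by simp)⟩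
    by_contra hinc
    exact ho.not_of_rel (show vVoter e a Alt.P (Alt.C j) from hinc)
      (hj Alt.P (by simp [altsFrom]) (by simp))
  · rintro ⟨hinc, hD⟩ (_ | _ | k) hx hxj
    · exact ho.of_rel (show vVoter e a (Alt.C j) Alt.P from hinc)
    · exact hD
    · have hjk : j < k := lt_of_C_mem_altsFrom hx hxj
      exact ho.of_rel (show vVoter e a (Alt.C j) (Alt.C k) by simp only [vVoter]; tauto)

end IsCompletion

/-- A ranking of the alternatives that completes the partial order of the vertex voter `v_a`; a
smaller rank is more preferred. The alternative `d` is inserted directly below `p` if `q` holds and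
put first otherwise. -/
noncomputable def vertexRank (e : Fin s → Fin r × Fin r) (a : Fin r) (q : Prop) : Alt s → ℕ
  | Alt.P => s + 1
  | Alt.D => if q then s + 2 else 0
  | Alt.C j => if Inc e a j then j + 1 else s + 3 + j

theorem vertexRank_injective (a : Fin r) (q : Prop) : Function.Injective (vertexRank e a q) := by
  intro x y hxy
  cases x <;> cases y <;> grind [vertexRank]

theorem vertexRank_lt_of_vVoter {x y : Alt s} (q : Prop) (hxy : vVoter e a x y) :
    vertexRank e a q x < vertexRank e a q y := by
  cases x <;> cases y <;> grind [vVoter, vertexRank]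

theorem exists_isCompletion_vVoter (e : Fin s → Fin r × Fin r) (S : Set (Fin r)) :
    ∃ o, IsCompletion (vVoter e) o ∧ (∀ a ∈ S, o a Alt.P Alt.D) ∧
      ∀ a j, o a (Alt.C j) Alt.D → a ∈ S := by
  refine ⟨fun a x y => vertexRank e a (a ∈ S) x < vertexRank e a (a ∈ S) y,
    fun a => ⟨?_, fun _ _ => vertexRank_lt_of_vVoter (a ∈ S)⟩, fun a ha => ?_, fun a j hlt => ?_⟩
  · exact (RelEmbedding.preimage ⟨_, vertexRank_injective a (a ∈ S)⟩ (· < ·)).isStrictTotalOrder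
  · simp [vertexRank, ha]
  · by_contra ha
    simp [vertexRank, ha] at hlt

end VertexVoters

section Profile

variable {r s h : ℕ} {e : Fin s → Fin r × Fin r}

instance isStrictTotalOrder_aux1 : IsStrictTotalOrder (Alt s) aux1 where
  trichotomous x y := by cases x <;> cases y <;> grind [aux1]
  irrefl x := by cases x <;> simp [aux1]
  trans x y z := by cases x <;> cases y <;> cases z <;> grind [aux1]

instance isStrictTotalOrder_aux2 : IsStrictTotalOrder (Alt s) aux2 where
  trichotomous x y := by cases x <;> cases y <;> grind [aux2]
  irrefl x := by cases x <;> simp [aux2]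
  trans x y z := by cases x <;> cases y <;> cases z <;> grind [aux2]

/-- The vertex voter `v_a` as a voter of the whole profile, where the vertex voters come first. -/
def vertexVoter (hr : 3 ≤ r) (a : Fin r) : Fin (2 * r - 3) :=
  Fin.castLE (by omega) a

theorem profile10_vertexVoter (hr : 3 ≤ r) (a : Fin r) :
    profile10 r s h e (vertexVoter hr a) = vVoter e a :=
  dif_pos a.isLt

theorem profile10_of_le_of_lt {i : Fin (2 * r - 3)} (hri : r ≤ i) (hi : i < r + (h - 2)) :
    profile10 r s h e i = aux1 := by
  rw [profile10, dif_neg hri.not_gt, if_pos hi]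

theorem profile10_of_add_le {i : Fin (2 * r - 3)} (hi : r + (h - 2) ≤ i) :
    profile10 r s h e i = aux2 := by
  rw [profile10, dif_neg (by omega), if_neg hi.not_gt]

theorem IsCompletion.exists_profile10 (h : ℕ) (hr : 3 ≤ r) {o : Fin r → Alt s → Alt s → Prop}
    (ho : IsCompletion (vVoter e) o) :
    ∃ comp, IsCompletion (profile10 r s h e) comp ∧ ∀ a, comp (vertexVoter hr a) = o a := by
  refine ⟨fun i => if hi : (i : ℕ) < r then o ⟨i, hi⟩ else profile10 r s h e i, fun i => ?_,
    fun a => dif_pos a.isLt⟩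
  by_cases hir : (i : ℕ) < r
  · simpa only [profile10, dif_pos hir] using ho ⟨i, hir⟩
  · simp only [profile10, dif_neg hir]
    split_ifs
    exacts [⟨inferInstance, fun _ _ => id⟩, ⟨inferInstance, fun _ _ => id⟩]

end Profile

namespace IsCompletion

variable {r s h : ℕ} {e : Fin s → Fin r × Fin r} {comp : Fin (2 * r - 3) → Alt s → Alt s → Prop}

theorem rel_P_D_iff_of_le (hc : IsCompletion (profile10 r s h e) comp) {i : Fin (2 * r - 3)}
    (hri : r ≤ i) : comp i Alt.P Alt.D ↔ r + (h - 2) ≤ i := by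
  rcases lt_or_ge (i : ℕ) (r + (h - 2)) with hi | hi
  · have hDP : profile10 r s h e i Alt.D Alt.P := by
      rw [profile10_of_le_of_lt hri hi]
      trivial
    exact iff_of_false (hc.not_of_rel hDP) hi.not_ge
  · have hPD : profile10 r s h e i Alt.P Alt.D := by
      rw [profile10_of_add_le hi]
      trivial
    exact iff_of_true (hc.of_rel hPD) hi

theorem rel_C_of_le (hc : IsCompletion (profile10 r s h e) comp) {i : Fin (2 * r - 3)}
    (hri : r ≤ i) {j : Fin s} {x : Alt s} (hx : x ∈ altsFrom j) (hxj : x ≠ Alt.C j) :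
    comp i (Alt.C j) x := by
  have aux_rel : aux1 (Alt.C j) x ∧ aux2 (Alt.C j) x := by
    obtain _ | _ | k := x
    · exact ⟨trivial, trivial⟩
    · exact ⟨trivial, trivial⟩
    · exact ⟨lt_of_C_mem_altsFrom hx hxj, lt_of_C_mem_altsFrom hx hxj⟩
  apply hc.of_rel
  rcases lt_or_ge (i : ℕ) (r + (h - 2)) with hi | hi
  · simpa only [profile10_of_le_of_lt hri hi] using aux_rel.1
  · simpa only [profile10_of_add_le hi] using aux_rel.2

theorem vVoter_restrict (hc : IsCompletion (profile10 r s h e) comp) (hr : 3 ≤ r) :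
    IsCompletion (vVoter e) fun a => comp (vertexVoter hr a) := fun a => by
  simpa only [profile10_vertexVoter] using hc (vertexVoter hr a)

open Finset

theorem isMajWinner_P_iff (hc : IsCompletion (profile10 r s h e) comp) (hr : 3 ≤ r) (hh : 2 ≤ h)
    (hhr : h ≤ r - 1) :
    IsMajWinner comp {Alt.P, Alt.D} Alt.P ↔
      h ≤ #{a | comp (vertexVoter hr a) Alt.P Alt.D} := by
  have supports_iff (i : Fin (2 * r - 3)) :
      (∀ x ∈ ({Alt.P, Alt.D} : Finset (Alt s)), x ≠ Alt.P → comp i Alt.P x) ↔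
        comp i Alt.P Alt.D := by simp
  rw [isMajWinner_iff_of_forall_iff (m := r) (k := r + (h - 2)) (by omega) (by omega)
    (fun a => supports_iff (vertexVoter hr a))
    (fun i hri => (supports_iff i).trans (hc.rel_P_D_iff_of_le hri))]
  omega

theorem isMajWinner_C_iff (hc : IsCompletion (profile10 r s h e) comp) (hr : 3 ≤ r) {j : Fin s}
    (hj : (e j).1 ≠ (e j).2) :
    IsMajWinner comp (altsFrom j) (Alt.C j) ↔
      comp (vertexVoter hr (e j).1) (Alt.C j) Alt.D ∧
        comp (vertexVoter hr (e j).2) (Alt.C j) Alt.D := by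
  rw [isMajWinner_iff_of_forall_iff (m := r) (k := r) (by omega) le_rfl
    (fun a => (hc.vVoter_restrict hr).forall_altsFrom_rel_C_iff (a := a))
    (fun i hri => iff_of_true (fun x => hc.rel_C_of_le hri) hri),
    ← two_le_card_filter_inc_and_iff hj fun a => comp (vertexVoter hr a) (Alt.C j) Alt.D]
  omega

theorem succWinner_agenda10_eq_P_iff (hc : IsCompletion (profile10 r s h e) comp) (hr : 3 ≤ r)
    (hh : 2 ≤ h) (hhr : h ≤ r - 1) (he : ∀ j, (e j).1 ≠ (e j).2) :
    succWinner comp (agenda10 s) = some Alt.P ↔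
      h ≤ #{a | comp (vertexVoter hr a) Alt.P Alt.D} ∧
        ∀ j, ¬ (comp (vertexVoter hr (e j).1) (Alt.C j) Alt.D ∧
          comp (vertexVoter hr (e j).2) (Alt.C j) Alt.D) := by
  rw [succWinner_agenda10_eq_P_iff_isMajWinner, hc.isMajWinner_P_iff hr hh hhr]
  simp only [hc.isMajWinner_C_iff hr (he _)]

end IsCompletion

/-- `G` has an independent set of size at least `h` iff some completion of the
constructed partial profile makes `p` the successive winner under the agenda
`c_1 ▷ … ▷ c_s ▷ p ▷ d`. -/
theorem stmt10 (r s h : ℕ) (hr : 3 ≤ r) (hh : 2 ≤ h) (hhr : h ≤ r - 1)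
    (e : Fin s → Fin r × Fin r) (he : ∀ j, (e j).1 ≠ (e j).2) :
    (∃ S : Finset (Fin r), h ≤ S.card ∧ ∀ j, ¬ ((e j).1 ∈ S ∧ (e j).2 ∈ S)) ↔
    (∃ comp : Fin (2 * r - 3) → Alt s → Alt s → Prop,
      (∀ idx, IsStrictTotalOrder (Alt s) (comp idx) ∧
        ∀ x y, profile10 r s h e idx x y → comp idx x y) ∧
      succWinner comp (agenda10 s) = some Alt.P) := by
  constructor
  · rintro ⟨S, hcard, hindep⟩
    obtain ⟨o, ho, rel_P_D, mem_of_rel_C_D⟩ := exists_isCompletion_vVoter e (S : Set (Fin r))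
    obtain ⟨comp, hcomp, comp_eq⟩ := ho.exists_profile10 h hr
    refine ⟨comp, hcomp, (hcomp.succWinner_agenda10_eq_P_iff hr hh hhr he).2 ?_⟩
    simp only [comp_eq]
    refine ⟨hcard.trans (Finset.card_le_card fun a ha => ?_), fun j hj => hindep j ?_⟩
    · exact Finset.mem_filter_univ a |>.2 (rel_P_D a ha)
    · exact hj.imp (mem_of_rel_C_D _ j) (mem_of_rel_C_D _ j)
  · rintro ⟨comp, hcomp : IsCompletion (profile10 r s h e) comp, hwin⟩
    obtain ⟨hcard, hedge⟩ := (hcomp.succWinner_agenda10_eq_P_iff hr hh hhr he).1 hwin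
    refine ⟨_, hcard, fun j hj => hedge j ?_⟩
    have hvertex := hcomp.vVoter_restrict hr
    simp only [Finset.mem_filter_univ] at hj
    exact ⟨hvertex.rel_C_D_of_rel_P_D (Or.inl rfl) hj.1,
      hvertex.rel_C_D_of_rel_P_D (Or.inr rfl) hj.2⟩
end
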